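/- In a finite graph whose vertices are the 44 weights λ¹,…,λ⁴⁴ of Table 1 and whose edges connect i and j whenever c_{i,j} ≠ 0 (as listed in Table 2), the graph has exactly two connected components, of sizes 28 and 16. -/

import Mathlib

/-- Table 2 of the paper: the pairs `(i, j)` (1-indexed) with `c_{i,j} ≠ 0`. -/
def table2 : List (ℕ × ℕ) :=
  [(1,2),(1,4),(1,14),(1,29),(1,41),(1,43),(1,8),(1,20),(1,32),
   (2,7),(2,9),(2,16),(2,24),(2,44),(2,8),(2,13),(2,19),
   (3,6),(3,10),(3,17),(3,30),(3,35),(3,42),(3,15),(3,26),(3,39),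
   (4,7),(4,8),(4,20),(4,32),(4,38),(4,14),(4,29),(4,41),
   (5,11),(5,21),(5,23),(5,24),(5,37),(5,44),(5,16),(5,33),(5,40),
   (6,12),(6,15),(6,26),(6,31),(6,39),(6,17),(6,30),(6,42),
   (7,8),(7,13),(7,19),(7,40),(7,9),(7,16),(7,24),
   (8,9),(8,14),(8,16),(8,24),(8,29),(8,37),(8,41),(8,13),(8,19),(8,20),(8,32),
   (9,13),(9,14),(9,19),(9,33),(9,16),(9,24),
   (10,12),(10,22),(10,27),(10,35),(10,42),(10,18),(10,25),(10,31),
   (11,16),(11,19),(11,28),(11,33),(11,40),(11,23),(11,37),(11,44),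
   (12,18),(12,25),(12,31),(12,39),(12,22),(12,27),(12,35),
   (13,16),(13,20),(13,23),(13,24),(13,19),
   (14,20),(14,32),(14,36),(14,29),(14,41),
   (15,17),(15,18),(15,27),(15,30),(15,42),(15,26),(15,39),
   (16,19),(16,23),(16,29),(16,37),(16,44),(16,24),(16,33),(16,40),
   (17,22),(17,25),(17,26),(17,39),(17,30),(17,42),
   (18,22),(18,27),(18,30),(18,35),(18,25),(18,31),
   (19,24),(19,32),
   (20,29),(20,34),(20,41),(20,32),
   (21,28),(21,34),(21,37),(21,41),(21,43),(21,29),(21,36),(21,38),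
   (22,25),(22,26),(22,31),(22,27),(22,35),
   (23,33),(23,34),(23,40),(23,37),(23,44),
   (24,41),
   (25,26),(25,27),(25,35),(25,31),
   (26,30),(26,42),(26,39),
   (27,30),(27,31),(27,35),
   (28,29),(28,32),(28,36),(28,38),(28,34),(28,37),(28,43),
   (29,32),(29,34),(29,37),(29,43),(29,36),(29,38),(29,41),
   (30,39),(30,42),
   (31,35),(31,39),
   (32,41),
   (33,36),(33,37),(33,44),(33,40),
   (34,36),(34,38),(34,37),(34,43),
   (35,42),
   (36,37),(36,43),(36,38),
   (37,38),(37,40),(37,43),(37,44),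
   (38,40),(38,43),
   (39,42),
   (40,44),
   (43,44)]

/-- The graph on the 44 weights `λ¹, …, λ⁴⁴` of Table 1, with an edge between
`i` and `j` whenever `c_{i,j} ≠ 0` (Table 2). -/
def blockGraph : SimpleGraph (Fin 44) :=
  SimpleGraph.fromRel (fun i j => ((i : ℕ) + 1, (j : ℕ) + 1) ∈ table2)

/-!
`λ³` and `λ⁸` are centres of the two components: every vertex is at distance at most two from one
of them. Send each vertex to the centre of its block; since both ends of every edge go to the same
centre, reachability is equality of centres.
-/

section General

variable {V α : Type*} {G : SimpleGraph V} {u v : V}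

theorem map_eq_of_reachable {f : V → α} (hf : ∀ u v, G.Adj u v → f u = f v)
    (h : G.Reachable u v) : f u = f v := by
  obtain ⟨p⟩ := h
  induction p with
  | nil => rfl
  | cons hadj _ ih => exact (hf _ _ hadj).trans ih

theorem reachable_iff_map_eq {f : V → V} (hreach : ∀ v, G.Reachable v (f v))
    (hadj : ∀ u v, G.Adj u v → f u = f v) : G.Reachable u v ↔ f u = f v where
  mp := map_eq_of_reachable hadj
  mpr h := (hreach u).trans (h ▸ (hreach v).symm)

end General

namespace blockGraph

instance : DecidableRel blockGraph.Adj :=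
  inferInstanceAs (DecidableRel (SimpleGraph.fromRel _).Adj)

/-- The labels in Table 2 of the weights in the component of `λ³`, the smaller of the two. The
label of a vertex `i : Fin 44` is `i + 1`. -/
def smallBlock : Finset ℕ :=
  {3, 6, 10, 12, 15, 17, 18, 22, 25, 26, 27, 30, 31, 35, 39, 42}

/-- The component of `λ⁸`, as a set of vertices. -/
def largeBlock : Finset (Fin 44) :=
  {i | (i : ℕ) + 1 ∉ smallBlock}

/-- A centre of the component of a vertex: `λ⁸` on the larger component, `λ³` on the smaller one.
Both have eccentricity two in their components. -/
def center (i : Fin 44) : Fin 44 :=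
  if i ∈ largeBlock then 7 else 2

/-- The parent map of a breadth-first spanning forest rooted at the two centres, each of which is
its own parent. The vector is indexed from `0`: the parent of `λⁱ⁺¹` is `λᵏ⁺¹` when `k` is its entry
at `i`. -/
def parent : Fin 44 → Fin 44 :=
  ![7, 7, 2, 7, 15, 2, 7, 7, 7, 2, 15,
    5, 7, 7, 2, 7, 2, 9, 7, 7, 28, 9,
    12, 7, 9, 2, 9, 28, 7, 2, 5, 7, 8,
    19, 2, 13, 7, 3, 2, 6, 7, 2, 0, 1]

theorem card_largeBlock : largeBlock.card = 28 := by
  decide +kernel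

theorem mem_smallBlock_iff_of_mem_table2 :
    ∀ p ∈ table2, p.1 ∈ smallBlock ↔ p.2 ∈ smallBlock := by
  decide +kernel

theorem mem_largeBlock_iff_of_adj {i j : Fin 44} (h : blockGraph.Adj i j) :
    i ∈ largeBlock ↔ j ∈ largeBlock := by
  simp only [largeBlock, Finset.mem_filter_univ, not_iff_not]
  rcases ((SimpleGraph.fromRel_adj _ _ _).mp h).2 with hij | hji
  · exact mem_smallBlock_iff_of_mem_table2 _ hij
  · exact (mem_smallBlock_iff_of_mem_table2 _ hji).symm

theorem center_eq_center_iff {i j : Fin 44} :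
    center i = center j ↔ (i ∈ largeBlock ↔ j ∈ largeBlock) := by
  by_cases hi : i ∈ largeBlock <;> by_cases hj : j ∈ largeBlock <;> simp [center, hi, hj]

theorem eq_parent_or_adj_parent : ∀ i, i = parent i ∨ blockGraph.Adj i (parent i) := by
  decide +kernel

theorem parent_parent : ∀ i, parent (parent i) = center i := by
  decide +kernel

theorem reachable_parent (i : Fin 44) : blockGraph.Reachable i (parent i) :=
  (eq_parent_or_adj_parent i).elim (fun h => h ▸ .rfl) (·.reachable)

theorem reachable_center (i : Fin 44) : blockGraph.Reachable i (center i) :=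
  parent_parent i ▸ (reachable_parent i).trans (reachable_parent (parent i))

theorem reachable_iff {i j : Fin 44} :
    blockGraph.Reachable i j ↔ (i ∈ largeBlock ↔ j ∈ largeBlock) :=
  have center_eq_of_adj i j (h : blockGraph.Adj i j) : center i = center j :=
    center_eq_center_iff.mpr (mem_largeBlock_iff_of_adj h)
  (reachable_iff_map_eq reachable_center center_eq_of_adj).trans center_eq_center_iff

end blockGraph

/-- this graph has exactly two connected components, of sizes
28 and 16. -/
theorem blockGraph_two_components :
    ∃ A : Finset (Fin 44), A.card = 28 ∧
      (∀ i ∈ A, ∀ j ∈ A, blockGraph.Reachable i j) ∧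
      (∀ i ∉ A, ∀ j ∉ A, blockGraph.Reachable i j) ∧
      (∀ i ∈ A, ∀ j ∉ A, ¬ blockGraph.Reachable i j) := by
  refine ⟨blockGraph.largeBlock, blockGraph.card_largeBlock, fun i hi j hj => ?_,
    fun i hi j hj => ?_, fun i hi j hj h => ?_⟩
  · exact blockGraph.reachable_iff.mpr (iff_of_true hi hj)
  · exact blockGraph.reachable_iff.mpr (iff_of_false hi hj)
  · exact hj ((blockGraph.reachable_iff.mp h).mp hi)
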